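/- arXiv:0811.2821 — 2 statements merged into one kernel-verified Lean document; each statement's English description precedes it below -/
import Mathlib

section
/- Let f ∈ A₁(c). Then for every x ∈ (−1,c₂) with x ≠ c₁: ((c₄−c₃)/(c₂−c₁))·((1−c₂)/(1−x)) ≤ (f(x)−c₃)/(x−c₁) ≤ ((c₄−c₃)/(c₂−c₁))·((1+c₂)/(1+x)); and for every x ∈ (c₂,1): ((c₄−c₃)/(c₂−c₁))·((1+c₂)/(1+x)) ≤ (f(x)−c₃)/(x−c₁) ≤ ((c₄−c₃)/(c₂−c₁))·((1−c₂)/(1−x)). -/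
open Set Complex

noncomputable section

/-- The doubly-slit plane `ℂ(J)` for `J ⊆ ℝ`. -/
def CSlit (J : Set ℝ) : Set ℂ := {z : ℂ | z.im ≠ 0 ∨ z.re ∈ J}

/-- `ℂ₁ = ℂ((−1,1))`. -/
def C1 : Set ℂ := CSlit (Set.Ioo (-1 : ℝ) 1)

/-- The class `A₁(c)` of normalized Herglotz functions. -/
structure MemA1 (c₁ c₂ c₃ c₄ : ℝ) (f : ℂ → ℂ) : Prop where
  holo : DifferentiableOn ℂ f C1
  maps : Set.MapsTo f C1 C1
  symm : ∀ z ∈ C1, f (starRingEnd ℂ z) = starRingEnd ℂ (f z)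
  upper : ∀ z ∈ C1, 0 < z.im → 0 ≤ (f z).im
  lower : ∀ z ∈ C1, z.im < 0 → (f z).im ≤ 0
  val1 : f (c₁ : ℂ) = (c₃ : ℂ)
  val2 : f (c₂ : ℂ) = (c₄ : ℂ)

/-!
Fix `a ∈ (α, β)` and a Herglotz function `f` on `ℂ((α, β))`. The bounds say that
`(z - α) (f z - f a) / (z - a)` increases and `(β - z) (f z - f a) / (z - a)` decreases on `(α, β)`;
the second claim is the first one for the reflected function `z ↦ -conj (f (-conj z))`.
A function that is real on an interval and has nonnegative imaginary part above it increases there,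
so it suffices that `(z - α) (f z - f a) / (z - a)` is again Herglotz. Formally this is the maximum
principle, because `(z - α) / (z - a)` is positive on the slits, but `f` need not have boundary
values there. Pulling back by `z = (α + β) / 2 + (β - α) w / (1 + w ^ 2)` from the unit disc, the
function becomes a positive multiple of
`(1 + w) ^ 2 / ((1 - a' w) (w - a')) * (F w - F a')`, where `a'` is the preimage of `a`. Replacing
`F w` by `F (r w)` with `r < 1` gives boundary values on the upper half-disc, and the weight is
nonnegative on the unit circle; then let `r → 1`.
-/

open Metric Bornology Filter
open scoped Topology ComplexConjugate

/-- Nevanlinna–Herglotz functions relative to a domain `U` meeting the real axis: holomorphic on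
`U`, real on the real points of `U`, and with nonnegative imaginary part on the upper half of `U`.
For `U = ℂ(J)` the reflection principle makes this the usual class; for the unit disc these are the
typically real functions. -/
structure HerglotzOn (U : Set ℂ) (f : ℂ → ℂ) : Prop where
  differentiableOn : DifferentiableOn ℂ f U
  im_nonneg : ∀ z ∈ U, 0 < z.im → 0 ≤ (f z).im
  im_eq_zero : ∀ z ∈ U, z.im = 0 → (f z).im = 0

theorem im_nonneg_of_forall_mem_frontier {f : ℂ → ℂ} {U : Set ℂ} (hU : IsBounded U)
    (hf : DiffContOnCl ℂ f U) (hfr : ∀ z ∈ frontier U, 0 ≤ (f z).im) {z : ℂ}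
    (hz : z ∈ closure U) : 0 ≤ (f z).im := by
  have norm_exp_le_one_iff (w : ℂ) : ‖exp (I * w)‖ ≤ 1 ↔ 0 ≤ w.im := by
    rw [norm_exp, Real.exp_le_one_iff, I_mul_re, neg_nonpos]
  have hexp : DiffContOnCl ℂ (fun w ↦ exp (I * f w)) U :=
    ⟨(hf.differentiableOn.const_mul I).cexp, (hf.continuousOn.const_mul I).cexp⟩
  rw [← norm_exp_le_one_iff]
  exact norm_le_of_forall_mem_frontier_norm_le hU hexp
    (fun w hw ↦ (norm_exp_le_one_iff _).2 (hfr w hw)) hz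

theorem frontier_halfDisc_subset :
    frontier (ball (0 : ℂ) 1 ∩ {z | 0 < z.im}) ⊆
      {z | ‖z‖ ≤ 1 ∧ z.im = 0} ∪ {z | ‖z‖ = 1 ∧ 0 < z.im} := by
  intro z hz
  rcases frontier_inter_subset _ _ hz with ⟨hcircle, hclosed⟩ | ⟨hclosed, hline⟩
  · rw [frontier_ball _ one_ne_zero, mem_sphere_zero_iff_norm] at hcircle
    rw [closure_setOfPred_lt_im] at hclosed
    exact (eq_or_lt_of_le hclosed).imp (⟨hcircle.le, ·.symm⟩) (⟨hcircle, ·⟩)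
  · rw [closure_ball _ one_ne_zero, mem_closedBall_zero_iff] at hclosed
    rw [frontier_setOfPred_lt_im] at hline
    exact .inl ⟨hclosed, hline⟩

theorem one_sub_ofReal_mul_ne_zero {a : ℝ} (ha : |a| < 1) {z : ℂ} (hz : ‖z‖ ≤ 1) :
    1 - a * z ≠ 0 := by
  refine sub_ne_zero.2 fun h ↦ ?_
  have hnorm : |a| * ‖z‖ = 1 := by simpa using (congrArg norm h).symm
  nlinarith [abs_nonneg a]

theorem HerglotzOn.comp {U V : Set ℂ} {f φ : ℂ → ℂ} (hf : HerglotzOn V f) (hφ : HerglotzOn U φ)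
    (hmaps : MapsTo φ U V) : HerglotzOn U (f ∘ φ) where
  differentiableOn := hf.differentiableOn.comp hφ.differentiableOn hmaps
  im_nonneg z hz hpos := by
    rcases (hφ.im_nonneg z hz hpos).eq_or_lt with hzero | hφpos
    · exact (hf.im_eq_zero _ (hmaps hz) hzero.symm).ge
    · exact hf.im_nonneg _ (hmaps hz) hφpos
  im_eq_zero z hz hzero := hf.im_eq_zero _ (hmaps hz) (hφ.im_eq_zero z hz hzero)

theorem HerglotzOn.comp_ofReal_mul {R r : ℝ} {f : ℂ → ℂ} (hf : HerglotzOn (ball 0 R) f)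
    (hr : 0 < r) : HerglotzOn (ball 0 (R / r)) (fun w ↦ f (r * w)) := by
  refine hf.comp (φ := fun w ↦ r * w) ⟨by fun_prop, fun z _ hz ↦ ?_, fun z _ hz ↦ ?_⟩ fun w hw ↦ ?_
  · simpa using (mul_pos hr hz).le
  · simp [hz]
  · rw [mem_ball_zero_iff, lt_div_iff₀ hr] at hw
    simpa [abs_of_pos hr, mul_comm] using hw

section RealAxis

variable {U : Set ℂ} {f : ℂ → ℂ} {a : ℝ}

theorem HerglotzOn.hasDerivAt (hf : HerglotzOn U f) (hU : IsOpen U) {z : ℂ} (hz : z ∈ U) :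
    HasDerivAt f (deriv f z) z :=
  (hf.differentiableOn.differentiableAt (hU.mem_nhds hz)).hasDerivAt

theorem HerglotzOn.neg_conj_neg_conj (hf : HerglotzOn U f) (hU : IsOpen U) :
    HerglotzOn ((fun z ↦ -conj z) ⁻¹' U) (fun z ↦ -conj (f (-conj z))) where
  differentiableOn z hz := by
    have hneg : DifferentiableAt ℂ (fun w ↦ f (-w)) (conj z) :=
      (hf.hasDerivAt hU hz).differentiableAt.comp (conj z) (differentiableAt_id.neg)
    have hconj := hneg.conj_conj.neg
    rw [conj_conj] at hconj
    exact hconj.differentiableWithinAt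
  im_nonneg z hz hpos := by simpa using hf.im_nonneg _ hz (by simpa using hpos)
  im_eq_zero z hz hreal := by simpa using hf.im_eq_zero _ hz (by simpa using hreal)

theorem HerglotzOn.im_deriv_eq_zero (hf : HerglotzOn U f) (hU : IsOpen U) (ha : (a : ℂ) ∈ U) :
    (deriv f a).im = 0 := by
  have hderiv : HasDerivAt (fun t : ℝ ↦ (f t).im) (deriv f a).im a :=
    imCLM.hasFDerivAt.comp_hasDerivAt a (hf.hasDerivAt hU ha).comp_ofReal
  have hzero : (fun t : ℝ ↦ (f t).im) =ᶠ[𝓝 a] fun _ ↦ 0 := by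
    filter_upwards [continuous_ofReal.continuousAt.eventually (hU.mem_nhds ha)] with t ht
    exact hf.im_eq_zero t ht (ofReal_im t)
  exact hderiv.unique ((hasDerivAt_const a 0).congr_of_eventuallyEq hzero)

theorem HerglotzOn.re_deriv_nonneg (hf : HerglotzOn U f) (hU : IsOpen U) (ha : (a : ℂ) ∈ U) :
    0 ≤ (deriv f a).re := by
  -- `Re f' (a)` is the derivative of `Im f` in the upward direction, and `Im f` is minimal at `a`.
  have hline : HasDerivAt (fun t : ℝ ↦ (a + t * I : ℂ)) I 0 := by
    simpa using ((hasDerivAt_id (0 : ℝ)).ofReal_comp.mul_const I).const_add (a : ℂ)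
  have hderiv : HasDerivAt (fun t : ℝ ↦ (f (a + t * I)).im) (deriv f a).re 0 := by
    have hcomp := HasDerivAt.comp (𝕜 := ℝ) (𝕜' := ℂ) 0 (h := fun t : ℝ ↦ (a + t * I : ℂ))
      (h₂ := f) (h₂' := deriv f a) (by simpa using hf.hasDerivAt hU ha) hline
    have him := imCLM.hasFDerivAt.comp_hasDerivAt 0 hcomp
    rwa [imCLM_apply, mul_I_im] at him
  have hmem : ∀ᶠ t : ℝ in 𝓝[>] 0, (a + t * I : ℂ) ∈ U :=
    (hline.continuousAt.eventually (by simpa using hU.mem_nhds ha)).filter_mono nhdsWithin_le_nhds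
  refine ge_of_tendsto hderiv.tendsto_slope_zero_right ?_
  filter_upwards [hmem, self_mem_nhdsWithin] with t ht htpos
  have hfa : (f a).im = 0 := hf.im_eq_zero a ha (ofReal_im a)
  have hft : 0 ≤ (f (a + t * I)).im := hf.im_nonneg _ ht (by simpa using htpos)
  simpa [hfa] using mul_nonneg (inv_nonneg.2 (mem_Ioi.1 htpos).le) hft

theorem HerglotzOn.monotoneOn_re {s : Set ℝ} (hf : HerglotzOn U f) (hU : IsOpen U)
    (hs : Convex ℝ s) (hsU : ∀ x ∈ s, (x : ℂ) ∈ U) : MonotoneOn (fun x : ℝ ↦ (f x).re) s := by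
  have hderiv (x : ℝ) (hx : x ∈ s) : HasDerivAt (fun x : ℝ ↦ (f x).re) (deriv f x).re x :=
    (hf.hasDerivAt hU (hsU x hx)).real_of_complex
  exact monotoneOn_of_hasDerivWithinAt_nonneg hs
    (fun x hx ↦ (hderiv x hx).continuousAt.continuousWithinAt)
    (fun x hx ↦ (hderiv x (interior_subset hx)).hasDerivWithinAt)
    (fun x hx ↦ hf.re_deriv_nonneg hU (hsU x (interior_subset hx)))

theorem HerglotzOn.im_dslope_eq_zero (hf : HerglotzOn U f) (hU : IsOpen U) (ha : (a : ℂ) ∈ U)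
    {x : ℝ} (hx : (x : ℂ) ∈ U) : (dslope f a x).im = 0 := by
  obtain rfl | hxa := eq_or_ne x a
  · rw [dslope_same, hf.im_deriv_eq_zero hU ha]
  · have hfa : (f a).im = 0 := hf.im_eq_zero a ha (ofReal_im a)
    have hfx : (f x).im = 0 := hf.im_eq_zero x hx (ofReal_im x)
    rw [dslope_of_ne f (ofReal_injective.ne hxa), slope_def_field, ← ofReal_sub, div_ofReal_im,
      sub_im, hfa, hfx, sub_zero, zero_div]

end RealAxis

section WeightedSlope

/-- The divided difference of `f` at the real point `a`, weighted so that the weight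
`(1 + w) ^ 2 / ((1 - a w) (w - a))` of the increment `f w - f a` is nonnegative on the unit
circle. -/
def weightedSlope (a : ℝ) (f : ℂ → ℂ) (w : ℂ) : ℂ := (1 + w) ^ 2 / (1 - a * w) * dslope f a w

variable {a : ℝ} {f : ℂ → ℂ}

theorem weight_eq_of_norm_eq_one (a : ℝ) {z : ℂ} (hz : ‖z‖ = 1) :
    (1 + z) ^ 2 / ((1 - a * z) * (z - a)) = (2 * (1 + z.re) / normSq (z - a) : ℝ) := by
  have hz0 : z ≠ 0 := norm_ne_zero_iff.1 (hz ▸ one_ne_zero)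
  have hconj : z * conj z = 1 := by simp [mul_conj, normSq_eq_norm_sq, hz]
  have hnum : (1 + z) ^ 2 = z * (2 * (1 + z.re) : ℝ) := by
    have hre : (2 * z.re : ℂ) = z + conj z := by simp [add_conj]
    push_cast
    linear_combination -hconj - z * hre
  have hden : (1 - a * z) * (z - a) = z * normSq (z - a) := by
    rw [← mul_conj, map_sub, conj_ofReal]
    linear_combination -(z - a) * hconj
  rw [hnum, hden, mul_div_mul_left _ _ hz0, ofReal_div]

theorem weightedSlope_of_ne {w : ℂ} (hwa : w ≠ a) :
    weightedSlope a f w = (1 + w) ^ 2 / ((1 - a * w) * (w - a)) * (f w - f a) := by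
  rw [weightedSlope, dslope_of_ne f hwa, slope_def_field, div_mul_div_comm, mul_div_right_comm]

theorem weightedSlope_ofReal_re {x : ℝ} (hxa : x ≠ a) :
    (weightedSlope a f x).re = (1 + x) ^ 2 / ((1 - a * x) * (x - a)) * ((f x).re - (f a).re) := by
  have hweight : (1 + x : ℂ) ^ 2 / ((1 - a * x) * (x - a)) =
      ((1 + x) ^ 2 / ((1 - a * x) * (x - a)) : ℝ) := by
    push_cast; rfl
  rw [weightedSlope_of_ne (ofReal_injective.ne hxa), hweight, re_ofReal_mul, sub_re]

theorem differentiableOn_weightedSlope {U : Set ℂ} (hf : DifferentiableOn ℂ f U)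
    (haU : U ∈ 𝓝 (a : ℂ)) (ha : |a| < 1) :
    DifferentiableOn ℂ (weightedSlope a f) (U ∩ closedBall 0 1) := by
  refine .mul (.div (by fun_prop) (by fun_prop) fun z hz ↦ ?_)
    (((differentiableOn_dslope haU).2 hf).mono inter_subset_left)
  exact one_sub_ofReal_mul_ne_zero ha (mem_closedBall_zero_iff.1 hz.2)

theorem HerglotzOn.im_weightedSlope_eq_zero {U : Set ℂ} (hf : HerglotzOn U f)
    (hU : IsOpen U) (ha : (a : ℂ) ∈ U) {z : ℂ} (hz : z ∈ U) (hreal : z.im = 0) :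
    (weightedSlope a f z).im = 0 := by
  lift z to ℝ using hreal
  have hweight : (1 + z : ℂ) ^ 2 / (1 - a * z) = ((1 + z) ^ 2 / (1 - a * z) : ℝ) := by
    push_cast; rfl
  rw [weightedSlope, hweight, im_ofReal_mul, hf.im_dslope_eq_zero hU ha hz, mul_zero]

theorem HerglotzOn.im_weightedSlope_nonneg_of_one_lt {R : ℝ} (hf : HerglotzOn (ball 0 R) f)
    (hR : 1 < R) (ha : |a| < 1) {w : ℂ} (hw : w ∈ ball 0 1) (hpos : 0 < w.im) :
    0 ≤ (weightedSlope a f w).im := by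
  have hsub : closedBall (0 : ℂ) 1 ⊆ ball 0 R := closedBall_subset_ball hR
  have haR : (a : ℂ) ∈ ball 0 R := hsub (by simpa using ha.le)
  have hdiff : DifferentiableOn ℂ (weightedSlope a f) (closedBall 0 1) := by
    simpa [inter_eq_right.2 hsub] using
      differentiableOn_weightedSlope hf.differentiableOn (isOpen_ball.mem_nhds haR) ha
  have hclosure : closure (ball (0 : ℂ) 1 ∩ {z | 0 < z.im}) ⊆ closedBall 0 1 :=
    (closure_mono inter_subset_left).trans closure_ball_subset_closedBall
  refine im_nonneg_of_forall_mem_frontier (isBounded_ball.subset inter_subset_left)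
    (hdiff.mono hclosure).diffContOnCl (fun z hz ↦ ?_) (subset_closure ⟨hw, hpos⟩)
  obtain ⟨hz1, hreal⟩ | ⟨hcircle, hzpos⟩ := frontier_halfDisc_subset hz
  · exact (hf.im_weightedSlope_eq_zero isOpen_ball haR (hsub (by simpa using hz1)) hreal).ge
  · have hza : z ≠ a := fun h ↦ hzpos.ne' (by simp [h])
    have hfa : (f a).im = 0 := hf.im_eq_zero a haR (ofReal_im a)
    have hfz : 0 ≤ (f z).im := hf.im_nonneg z (hsub (by simp [hcircle])) hzpos
    have hre : -1 ≤ z.re := (abs_le.1 ((abs_re_le_norm z).trans hcircle.le)).1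
    rw [weightedSlope_of_ne hza, weight_eq_of_norm_eq_one a hcircle, im_ofReal_mul, sub_im, hfa,
      sub_zero]
    exact mul_nonneg (div_nonneg (by linarith) (normSq_nonneg _)) hfz

theorem tendsto_weightedSlope_comp_ofReal_mul {w : ℂ} (hwa : w ≠ a) (hfa : ContinuousAt f a)
    (hfw : ContinuousAt f w) :
    Tendsto (fun r : ℝ ↦ weightedSlope a (fun z ↦ f (r * z)) w) (𝓝 1)
      (𝓝 (weightedSlope a f w)) := by
  have hdil {z : ℂ} (hz : ContinuousAt f z) : Tendsto (fun r : ℝ ↦ f (r * z)) (𝓝 1) (𝓝 (f z)) := by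
    have hmul : Tendsto (fun r : ℝ ↦ (r * z : ℂ)) (𝓝 1) (𝓝 z) :=
      Continuous.tendsto' (by fun_prop) _ _ (by simp)
    exact hz.tendsto.comp hmul
  simpa only [weightedSlope_of_ne hwa] using ((hdil hfw).sub (hdil hfa)).const_mul _

theorem herglotzOn_weightedSlope (hf : HerglotzOn (ball 0 1) f) (ha : |a| < 1) :
    HerglotzOn (ball 0 1) (weightedSlope a f) := by
  have haB : (a : ℂ) ∈ ball 0 1 := by simpa using ha
  refine ⟨?_, fun w hw hpos ↦ ?_, fun w hw ↦ hf.im_weightedSlope_eq_zero isOpen_ball haB hw⟩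
  · simpa [inter_eq_left.2 ball_subset_closedBall] using
      differentiableOn_weightedSlope hf.differentiableOn (isOpen_ball.mem_nhds haB) ha
  have hwa : w ≠ a := fun h ↦ hpos.ne' (by simp [h])
  have hcont {z : ℂ} (hz : z ∈ ball 0 1) : ContinuousAt f z :=
    (hf.hasDerivAt isOpen_ball hz).continuousAt
  have hlim := (continuous_im.tendsto _).comp
    (tendsto_weightedSlope_comp_ofReal_mul hwa (hcont haB) (hcont hw))
  refine ge_of_tendsto (hlim.mono_left (nhdsWithin_le_nhds (s := Iio 1))) ?_
  filter_upwards [Ioo_mem_nhdsLT zero_lt_one] with r hr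
  exact (hf.comp_ofReal_mul hr.1).im_weightedSlope_nonneg_of_one_lt
    ((one_lt_div hr.1).2 hr.2) ha hw hpos

end WeightedSlope

section SlitParam

/-- The parametrization `w ↦ (α + β) / 2 + (β - α) w / (1 + w ^ 2)` of `ℂ((α, β))` by the unit disc.
It is defined over an arbitrary field, so that the same formula gives the homeomorphism of
`(-1, 1)` onto `(α, β)`. -/
def slitParam {K : Type*} [Field K] (α β w : K) : K := (α + β) / 2 + (β - α) * w / (1 + w ^ 2)

section Field

variable {K : Type*} [Field K] {α β w : K}

theorem slitParam_sub_slitParam {v : K} (hv : 1 + v ^ 2 ≠ 0) (hw : 1 + w ^ 2 ≠ 0) :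
    slitParam α β w - slitParam α β v =
      (β - α) * ((1 - v * w) * (w - v) / ((1 + v ^ 2) * (1 + w ^ 2))) := by
  rw [slitParam, slitParam]; field_simp; ring

variable [NeZero (2 : K)]

theorem slitParam_sub_left (hw : 1 + w ^ 2 ≠ 0) :
    slitParam α β w - α = (β - α) / 2 * ((1 + w) ^ 2 / (1 + w ^ 2)) := by
  rw [slitParam]; field_simp; ring

theorem right_sub_slitParam (hw : 1 + w ^ 2 ≠ 0) :
    β - slitParam α β w = (β - α) / 2 * ((1 - w) ^ 2 / (1 + w ^ 2)) := by
  rw [slitParam]; field_simp; ring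

end Field

theorem one_add_sq_ne_zero_of_norm_lt_one {w : ℂ} (hw : ‖w‖ < 1) : 1 + w ^ 2 ≠ 0 := by
  intro h
  have hnorm : ‖w‖ ^ 2 = 1 := by simpa using congrArg norm (eq_neg_of_add_eq_zero_right h)
  nlinarith [norm_nonneg w]

variable {α β : ℝ}

theorem ofReal_slitParam (α β x : ℝ) : ((slitParam α β x : ℝ) : ℂ) = slitParam (α : ℂ) β x := by
  simp [slitParam]

theorem slitParam_im (α β : ℝ) (w : ℂ) :
    (slitParam (α : ℂ) β w).im = (β - α) * (1 - normSq w) / normSq (1 + w ^ 2) * w.im := by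
  have hsplit : slitParam (α : ℂ) β w = ((α + β) / 2 : ℝ) + (β - α : ℝ) * (w / (1 + w ^ 2)) := by
    simp [slitParam, mul_div_assoc]
  rw [hsplit, add_im, ofReal_im, im_ofReal_mul, div_im, normSq_apply w]
  simp only [pow_two, add_re, one_re, mul_re, add_im, one_im, mul_im]
  ring

theorem exists_pos_slitParam_im_eq_mul (hαβ : α < β) {w : ℂ} (hw : ‖w‖ < 1) :
    ∃ k : ℝ, 0 < k ∧ (slitParam (α : ℂ) β w).im = k * w.im := by
  have hden : 1 + w ^ 2 ≠ 0 := one_add_sq_ne_zero_of_norm_lt_one hw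
  have hnormSq : normSq w < 1 := by
    rw [normSq_eq_norm_sq]
    exact pow_lt_one₀ (norm_nonneg w) hw two_ne_zero
  exact ⟨_, div_pos (mul_pos (sub_pos.2 hαβ) (sub_pos.2 hnormSq)) (normSq_pos.2 hden),
    slitParam_im α β w⟩

theorem strictMonoOn_slitParam (hαβ : α < β) : StrictMonoOn (slitParam α β) (Ioo (-1) 1) := by
  intro v hv w hw hvw
  have hvw' : 0 < 1 - v * w := by nlinarith [hv.1, hv.2, hw.1, hw.2]
  rw [← sub_pos, slitParam_sub_slitParam (by positivity) (by positivity)]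
  have : 0 < w - v := sub_pos.2 hvw
  have : 0 < β - α := sub_pos.2 hαβ
  positivity

theorem slitParam_mem_Ioo (hαβ : α < β) {x : ℝ} (hx : x ∈ Ioo (-1) 1) :
    slitParam α β x ∈ Ioo α β := by
  have : 0 < β - α := sub_pos.2 hαβ
  have h1 : 0 < 1 + x := by linarith [hx.1]
  have h2 : 0 < 1 - x := by linarith [hx.2]
  constructor
  · rw [← sub_pos, slitParam_sub_left (by positivity)]; positivity
  · rw [← sub_pos, right_sub_slitParam (by positivity)]; positivity

theorem surjOn_slitParam (α β : ℝ) : SurjOn (slitParam α β) (Ioo (-1) 1) (Ioo α β) := by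
  have hcont : Continuous (slitParam α β) :=
    continuous_const.add (.div (by fun_prop) (by fun_prop) fun w ↦ by positivity)
  have hleft : slitParam α β (-1) = α := by rw [slitParam]; ring
  have hright : slitParam α β 1 = β := by rw [slitParam]; ring
  have hIVT := intermediate_value_Ioo (by norm_num : (-1 : ℝ) ≤ 1) hcont.continuousOn
  rwa [hleft, hright] at hIVT

theorem mapsTo_slitParam (hαβ : α < β) :
    MapsTo (slitParam (α : ℂ) β) (ball 0 1) (CSlit (Ioo α β)) := by
  intro w hw
  rw [mem_ball_zero_iff] at hw
  by_cases hreal : w.im = 0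
  · lift w to ℝ using hreal
    right
    rw [← ofReal_slitParam, ofReal_re]
    exact slitParam_mem_Ioo hαβ (abs_lt.1 (by simpa using hw))
  · obtain ⟨k, hk, him⟩ := exists_pos_slitParam_im_eq_mul hαβ hw
    exact .inl (him ▸ mul_ne_zero hk.ne' hreal)

theorem herglotzOn_slitParam (hαβ : α < β) : HerglotzOn (ball 0 1) (slitParam (α : ℂ) β) where
  differentiableOn := .const_add _ <| .div (by fun_prop) (by fun_prop) fun w hw ↦
    one_add_sq_ne_zero_of_norm_lt_one (mem_ball_zero_iff.1 hw)
  im_nonneg w hw hpos := by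
    obtain ⟨k, hk, him⟩ := exists_pos_slitParam_im_eq_mul hαβ (mem_ball_zero_iff.1 hw)
    exact him ▸ (mul_pos hk hpos).le
  im_eq_zero w hw hreal := by
    obtain ⟨k, -, him⟩ := exists_pos_slitParam_im_eq_mul hαβ (mem_ball_zero_iff.1 hw)
    rw [him, hreal, mul_zero]

end SlitParam

section DoublySlitPlane

variable {α β a : ℝ} {f : ℂ → ℂ}

theorem isOpen_CSlit {J : Set ℝ} (hJ : IsOpen J) : IsOpen (CSlit J) :=
  (isOpen_ne_fun continuous_im continuous_const).union (hJ.preimage continuous_re)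

theorem preimage_neg_conj_CSlit_Ioo (α β : ℝ) :
    (fun z ↦ -conj z) ⁻¹' CSlit (Ioo α β) = CSlit (Ioo (-β) (-α)) := by
  ext z
  simp [CSlit, neg_lt, lt_neg, and_comm]

theorem slope_neg_comp_neg {K : Type*} [Field K] (g : K → K) (a x : K) :
    slope (fun t ↦ -g (-t)) (-a) (-x) = slope g a x := by
  simp only [slope_def_field, neg_neg]
  rw [← neg_div_neg_eq]
  ring

theorem sub_left_mul_slope_slitParam (hαβ : α ≠ β) {s u : ℝ} (hus : u ≠ s) :
    (slitParam α β u - α) * slope (fun t : ℝ ↦ (f t).re) (slitParam α β s) (slitParam α β u) =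
      (1 + s ^ 2) / 2 * (weightedSlope s (f ∘ slitParam (α : ℂ) β) u).re := by
  have hβα : β - α ≠ 0 := sub_ne_zero.2 hαβ.symm
  have hne : u - s ≠ 0 := sub_ne_zero.2 hus
  rw [slope_def_field, slitParam_sub_left (by positivity),
    slitParam_sub_slitParam (by positivity) (by positivity), weightedSlope_ofReal_re hus]
  simp only [Function.comp_apply, ofReal_slitParam]
  field_simp

theorem HerglotzOn.monotoneOn_sub_left_mul_slope (hf : HerglotzOn (CSlit (Ioo α β)) f)
    (ha : a ∈ Ioo α β) :
    MonotoneOn (fun x : ℝ ↦ (x - α) * slope (fun t : ℝ ↦ (f t).re) a x) (Ioo α β \ {a}) := by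
  have hαβ : α < β := ha.1.trans ha.2
  obtain ⟨s, hs, rfl⟩ := surjOn_slitParam α β ha
  have hdisc : HerglotzOn (ball 0 1) (weightedSlope s (f ∘ slitParam (α : ℂ) β)) :=
    herglotzOn_weightedSlope (hf.comp (herglotzOn_slitParam hαβ) (mapsTo_slitParam hαβ))
      (abs_lt.2 hs)
  have hmono := hdisc.monotoneOn_re isOpen_ball (convex_Ioo (-1) 1)
    fun x hx ↦ by simpa using abs_lt.2 hx
  rintro x ⟨hx, hxa⟩ y ⟨hy, hya⟩ hxy
  obtain ⟨u, hu, rfl⟩ := surjOn_slitParam α β hx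
  obtain ⟨v, hv, rfl⟩ := surjOn_slitParam α β hy
  have huv : u ≤ v := ((strictMonoOn_slitParam hαβ).le_iff_le hu hv).1 hxy
  dsimp only
  rw [sub_left_mul_slope_slitParam hαβ.ne (ne_of_apply_ne (slitParam α β) hxa),
    sub_left_mul_slope_slitParam hαβ.ne (ne_of_apply_ne (slitParam α β) hya)]
  exact mul_le_mul_of_nonneg_left (hmono hu hv huv) (by positivity)

theorem HerglotzOn.antitoneOn_right_sub_mul_slope (hf : HerglotzOn (CSlit (Ioo α β)) f)
    (ha : a ∈ Ioo α β) :
    AntitoneOn (fun x : ℝ ↦ (β - x) * slope (fun t : ℝ ↦ (f t).re) a x) (Ioo α β \ {a}) := by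
  have hreflect := hf.neg_conj_neg_conj (isOpen_CSlit isOpen_Ioo)
  rw [preimage_neg_conj_CSlit_Ioo] at hreflect
  have hmono := hreflect.monotoneOn_sub_left_mul_slope (a := -a) (by simpa using ha.symm)
  rintro x ⟨hx, hxa⟩ y ⟨hy, hya⟩ hxy
  have hle := hmono (a := -y) (b := -x) (by simpa using ⟨hy.symm, hya⟩)
    (by simpa using ⟨hx.symm, hxa⟩) (neg_le_neg hxy)
  have hslope (t : ℝ) : slope (fun t : ℝ ↦ (-conj (f (-conj (t : ℂ)))).re) (-a) (-t) =
      slope (fun t : ℝ ↦ (f t).re) a t := by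
    simpa using slope_neg_comp_neg (fun t : ℝ ↦ (f t).re) a t
  simpa only [hslope, neg_sub_neg] using hle

end DoublySlitPlane

theorem MemA1.herglotzOn {c₁ c₂ c₃ c₄ : ℝ} {f : ℂ → ℂ} (hf : MemA1 c₁ c₂ c₃ c₄ f) :
    HerglotzOn (CSlit (Ioo (-1) 1)) f where
  differentiableOn := hf.holo
  im_nonneg := hf.upper
  im_eq_zero z hz hreal := by
    have hsymm := hf.symm z hz
    rwa [conj_eq_iff_im.2 hreal, eq_comm, conj_eq_iff_im] at hsymm

theorem stmt5_general {α β c₁ c₂ : ℝ} (hc₁ : c₁ ∈ Ioo α β) (hc₂ : c₂ ∈ Ioo α β) (hc : c₁ ≠ c₂)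
    {f : ℂ → ℂ} (hf : HerglotzOn (CSlit (Ioo α β)) f) :
    (∀ x ∈ Ioo α c₂, x ≠ c₁ →
      ((f c₂).re - (f c₁).re) / (c₂ - c₁) * ((β - c₂) / (β - x)) ≤
        ((f x).re - (f c₁).re) / (x - c₁) ∧
      ((f x).re - (f c₁).re) / (x - c₁) ≤
        ((f c₂).re - (f c₁).re) / (c₂ - c₁) * ((c₂ - α) / (x - α))) ∧
    (∀ x ∈ Ioo c₂ β, x ≠ c₁ →
      ((f c₂).re - (f c₁).re) / (c₂ - c₁) * ((c₂ - α) / (x - α)) ≤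
        ((f x).re - (f c₁).re) / (x - c₁) ∧
      ((f x).re - (f c₁).re) / (x - c₁) ≤
        ((f c₂).re - (f c₁).re) / (c₂ - c₁) * ((β - c₂) / (β - x))) := by
  have hmono := hf.monotoneOn_sub_left_mul_slope hc₁
  have hanti := hf.antitoneOn_right_sub_mul_slope hc₁
  have hc₂' : c₂ ∈ Ioo α β \ {c₁} := ⟨hc₂, hc.symm⟩
  simp only [slope_def_field, mul_comm _ (_ / (_ - c₁))] at hmono hanti
  simp only [← mul_div_assoc]
  refine ⟨fun x hx hxc ↦ ?_, fun x hx hxc ↦ ?_⟩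
  · have hx' : x ∈ Ioo α β \ {c₁} := ⟨⟨hx.1, hx.2.trans hc₂.2⟩, hxc⟩
    exact ⟨(div_le_iff₀ (sub_pos.2 hx'.1.2)).2 (hanti hx' hc₂' hx.2.le),
      (le_div_iff₀ (sub_pos.2 hx'.1.1)).2 (hmono hx' hc₂' hx.2.le)⟩
  · have hx' : x ∈ Ioo α β \ {c₁} := ⟨⟨hc₂.1.trans hx.1, hx.2⟩, hxc⟩
    exact ⟨(div_le_iff₀ (sub_pos.2 hx'.1.1)).2 (hmono hc₂' hx' hx.1.le),
      (le_div_iff₀ (sub_pos.2 hx'.1.2)).2 (hanti hc₂' hx' hx.1.le)⟩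

theorem stmt5 (c₁ c₂ c₃ c₄ : ℝ)
    (h1 : -1 < c₁) (h12 : c₁ < c₂) (h2 : c₂ < 1)
    (h3 : -1 < c₃) (h34 : c₃ < c₄) (h4 : c₄ < 1)
    (f : ℂ → ℂ) (hf : MemA1 c₁ c₂ c₃ c₄ f) :
    (∀ x : ℝ, x ∈ Set.Ioo (-1 : ℝ) c₂ → x ≠ c₁ →
      ((c₄ - c₃) / (c₂ - c₁)) * ((1 - c₂) / (1 - x)) ≤ ((f x).re - c₃) / (x - c₁) ∧
      ((f x).re - c₃) / (x - c₁) ≤ ((c₄ - c₃) / (c₂ - c₁)) * ((1 + c₂) / (1 + x))) ∧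
    (∀ x : ℝ, x ∈ Set.Ioo c₂ (1 : ℝ) →
      ((c₄ - c₃) / (c₂ - c₁)) * ((1 + c₂) / (1 + x)) ≤ ((f x).re - c₃) / (x - c₁) ∧
      ((f x).re - c₃) / (x - c₁) ≤ ((c₄ - c₃) / (c₂ - c₁)) * ((1 - c₂) / (1 - x))) := by
  have hbounds := stmt5_general ⟨h1, h12.trans h2⟩ ⟨h1.trans h12, h2⟩ h12.ne hf.herglotzOn
  simp only [hf.val1, hf.val2, ofReal_re, sub_neg_eq_add, add_comm _ (1 : ℝ)] at hbounds
  exact ⟨hbounds.1, fun x hx ↦ hbounds.2 x hx (h12.trans hx.1).ne'⟩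
end
end

section
/- Let f ∈ A₁(c). Then there exist a real number a ≥ 0 and a positive Borel measure ν on ℝ supported in ℝ ∖ (−1,1) with ∫ dν(t)/(1+t²) < ∞, such that for every z ∈ ℂ₁: f(z) − c₃ = a·(z − c₁) + ∫ (1/(t−z) − 1/(t−c₁)) dν(t). -/
open Set Complex

noncomputable section

/-!
Composing `f` with the conformal map `ζ ↦ 2ζ / (1 + ζ²)` of the unit disc onto `ℂ₁` gives a
typically real function `F`. If `F` extends continuously to the closed disc, the mean value
property and the symmetry `F(ē) = conj F(e)` express `F(ζ) - F(0)` as the average over the unit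
circle of the kernel `2ζ / (1 - 2ζ Re e + ζ²)` against the weight `Im e · Im F(e)`, which is
nonnegative because `F` is typically real. Applying this to `ζ ↦ F(rζ)` and letting `r → 1`, weak
compactness of bounded sets of measures removes the continuity assumption. In terms of
`z = 2ζ / (1 + ζ²)` and `t = Re e ∈ [-1, 1]` the kernel is `z / (1 - tz)`, and the substitution
`t ↦ 1/t` turns it into the difference of resolvents in the theorem, the atom at `t = 0` becoming
the linear term.
-/

open Filter Topology Metric MeasureTheory Real
open scoped ComplexConjugate

section Circle

lemma one_sub_mul_ne_zero_of_norm_lt_one {ζ e : ℂ} (hζ : ‖ζ‖ < 1) (he : ‖e‖ ≤ 1) :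
    1 - ζ * e ≠ 0 := by
  refine sub_ne_zero.2 fun h => ?_
  have : ‖ζ * e‖ < 1 := by
    rw [norm_mul]
    exact mul_lt_one_of_nonneg_of_lt_one_left (norm_nonneg ζ) hζ he
  simp [← h] at this

lemma sub_ne_zero_of_norm_lt_one {ζ e : ℂ} (hζ : ‖ζ‖ < 1) (he : ‖e‖ = 1) : e - ζ ≠ 0 :=
  sub_ne_zero.2 fun h => by simp [← h, he] at hζ

/-- The kernel `2ζ / (1 - 2tζ + ζ²)` in Robertson's representation of typically real functions on
the unit disc as superpositions over `t ∈ [-1, 1]`. -/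
def robertsonKernel (ζ : ℂ) (t : ℝ) : ℂ := 2 * ζ / (1 - 2 * t * ζ + ζ ^ 2)

variable {ζ e : ℂ}

lemma sub_mul_one_sub_mul_eq_of_norm_eq_one (he : ‖e‖ = 1) :
    (e - ζ) * (1 - ζ * e) = e * (1 - 2 * e.re * ζ + ζ ^ 2) := by
  have hconj : e * conj e = 1 := by simp [mul_conj, normSq_eq_norm_sq, he]
  have hre : e + conj e = 2 * e.re := by simp [add_conj]
  linear_combination ζ * hconj - e * ζ * hre

lemma robertsonKernel_denom_ne_zero (hζ : ‖ζ‖ < 1) (he : ‖e‖ = 1) :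
    1 - 2 * e.re * ζ + ζ ^ 2 ≠ 0 := by
  have hprod := mul_ne_zero (sub_ne_zero_of_norm_lt_one hζ he)
    (one_sub_mul_ne_zero_of_norm_lt_one hζ he.le)
  rw [sub_mul_one_sub_mul_eq_of_norm_eq_one he] at hprod
  exact right_ne_zero_of_mul hprod

lemma continuousOn_robertsonKernel_re (hζ : ‖ζ‖ < 1) :
    ContinuousOn (fun e : ℂ => robertsonKernel ζ e.re) (sphere 0 1) :=
  ContinuousOn.div (by fun_prop) (by fun_prop) fun _ he =>
    robertsonKernel_denom_ne_zero hζ (by simpa using he)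

lemma div_sub_one_mul_eq_robertsonKernel (hζ : ‖ζ‖ < 1) (he : ‖e‖ = 1) :
    (e / (e - ζ) - 1) * ((1 - e ^ 2) / (1 - ζ * e)) = -I * e.im * robertsonKernel ζ e.re := by
  have hsub := sub_ne_zero_of_norm_lt_one hζ he
  have hsq : 1 - e ^ 2 = -2 * I * e.im * e := by
    have hconj : e * conj e = 1 := by simp [mul_conj, normSq_eq_norm_sq, he]
    have him : e - conj e = 2 * e.im * I := by simp [sub_conj]
    linear_combination -hconj - e * him
  have he0 : e ≠ 0 := norm_ne_zero_iff.1 (by simp [he])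
  calc (e / (e - ζ) - 1) * ((1 - e ^ 2) / (1 - ζ * e))
      = ζ * (1 - e ^ 2) / ((e - ζ) * (1 - ζ * e)) := by field_simp; ring
    _ = -I * e.im * robertsonKernel ζ e.re := by
      rw [sub_mul_one_sub_mul_eq_of_norm_eq_one he, hsq, robertsonKernel]
      field_simp

variable {F : ℂ → ℂ}

lemma continuousOn_sphere_of_diffContOnCl (hF : DiffContOnCl ℂ F (ball 0 1)) :
    ContinuousOn F (sphere 0 1) :=
  hF.continuousOn_ball.mono sphere_subset_closedBall

lemma diffContOnCl_one_sub_sq_div_mul (hF : DiffContOnCl ℂ F (ball 0 1)) (hζ : ‖ζ‖ < 1) :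
    DiffContOnCl ℂ (fun e => (1 - e ^ 2) / (1 - ζ * e) * F e) (ball 0 1) := by
  have hne (e : ℂ) (he : e ∈ closedBall (0 : ℂ) 1) : 1 - ζ * e ≠ 0 :=
    one_sub_mul_ne_zero_of_norm_lt_one hζ (mem_closedBall_zero_iff.1 he)
  refine DiffContOnCl.mk_ball ?_ ?_
  · refine DifferentiableOn.mul (DifferentiableOn.div (by fun_prop) (by fun_prop) ?_) hF.1
    exact fun e he => hne e (ball_subset_closedBall he)
  · exact ContinuousOn.mul (ContinuousOn.div (by fun_prop) (by fun_prop) hne) hF.continuousOn_ball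

/- Mean value property of `e ↦ (1 - e²) F(e) / (1 - ζe)` at `0` and at `ζ`, where it agrees with
`F`; the factor in front of `F` is what makes the resulting kernel odd under conjugation. -/
lemma sub_eq_circleAverage_im_mul (hF : DiffContOnCl ℂ F (ball 0 1)) (hζ : ‖ζ‖ < 1) :
    F ζ - F 0 = circleAverage (fun e => -I * e.im * robertsonKernel ζ e.re * F e) 0 1 := by
  set H : ℂ → ℂ := fun e => (1 - e ^ 2) / (1 - ζ * e) * F e with hH
  have hHd : DiffContOnCl ℂ H (ball 0 1) := diffContOnCl_one_sub_sq_div_mul hF hζ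
  have hHs : ContinuousOn H (sphere 0 1) := continuousOn_sphere_of_diffContOnCl hHd
  have hCauchy : ContinuousOn (fun e => e / (e - ζ) * H e) (sphere 0 1) :=
    (ContinuousOn.div (by fun_prop) (by fun_prop) fun e he =>
      sub_ne_zero_of_norm_lt_one hζ (mem_sphere_zero_iff_norm.1 he)).mul hHs
  have hmean_zero : circleAverage H 0 1 = F 0 := by
    rw [DiffContOnCl.circleAverage (by simpa using hHd)]
    simp [hH]
  have hmean : circleAverage (fun e => e / (e - ζ) * H e) 0 1 = F ζ := by
    have hne : 1 - ζ ^ 2 ≠ 0 := by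
      simpa only [pow_two] using one_sub_mul_ne_zero_of_norm_lt_one hζ hζ.le
    have := DiffContOnCl.circleAverage_smul_div (f := H) (c := 0) (R := 1) (w := ζ)
      (by simpa using hHd) (by simpa using hζ)
    simpa only [hH, sub_zero, smul_eq_mul, ← pow_two, div_self hne, one_mul] using this
  rw [← hmean, ← hmean_zero, ← circleAverage_fun_sub (hCauchy.circleIntegrable zero_le_one)
    (hHs.circleIntegrable zero_le_one)]
  refine circleAverage_congr_sphere fun e he => ?_
  have he1 : ‖e‖ = 1 := by simpa using he
  simp only [hH]
  linear_combination F e * div_sub_one_mul_eq_robertsonKernel hζ he1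

lemma sub_eq_circleAverage_im_mul_im (hF : DiffContOnCl ℂ F (ball 0 1))
    (hconj : ∀ e ∈ sphere (0 : ℂ) 1, F (conj e) = conj (F e)) (hζ : ‖ζ‖ < 1) :
    F ζ - F 0 = circleAverage (fun e => (e.im * (F e).im) • robertsonKernel ζ e.re) 0 1 := by
  set g : ℂ → ℂ := fun e => -I * e.im * robertsonKernel ζ e.re * F e with hg
  have hgc : ContinuousOn g (sphere 0 1) :=
    (ContinuousOn.mul (by fun_prop) (continuousOn_robertsonKernel_re hζ)).mul
      (continuousOn_sphere_of_diffContOnCl hF)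
  have hginv : ContinuousOn (fun e => g e⁻¹) (sphere 0 1) :=
    hgc.comp (continuousOn_inv₀.mono fun e he => ne_of_mem_sphere he one_ne_zero)
      fun e he => by simpa using he
  have hsymm : EqOn (fun e => g e + g e⁻¹)
      (fun e => (2 : ℂ) • (e.im * (F e).im) • robertsonKernel ζ e.re) (sphere 0 |1|) := by
    intro e he
    rw [abs_one] at he
    have hinv : e⁻¹ = conj e := inv_eq_conj (mem_sphere_zero_iff_norm.1 he)
    have him : F e - conj (F e) = 2 * (F e).im * I := by simp [sub_conj]
    simp only [hg, hinv, hconj e he, conj_re, conj_im, real_smul, smul_eq_mul]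
    push_cast
    linear_combination (-I * e.im * robertsonKernel ζ e.re) * him -
      2 * e.im * (F e).im * robertsonKernel ζ e.re * I_sq
  have hdouble : (2 : ℂ) • (F ζ - F 0) =
      (2 : ℂ) • circleAverage (fun e => (e.im * (F e).im) • robertsonKernel ζ e.re) 0 1 :=
    calc (2 : ℂ) • (F ζ - F 0) = circleAverage g 0 1 + circleAverage (fun e => g e⁻¹) 0 1 := by
          rw [circleAverage_zero_one_congr_inv, sub_eq_circleAverage_im_mul hF hζ, two_smul]
      _ = circleAverage (fun e => g e + g e⁻¹) 0 1 :=
          (circleAverage_fun_add (hgc.circleIntegrable zero_le_one)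
            (hginv.circleIntegrable zero_le_one)).symm
      _ = _ := by rw [circleAverage_congr_sphere hsymm, circleAverage_fun_smul]
  exact smul_right_injective ℂ two_ne_zero hdouble

end Circle

section FiniteMeasures

lemma exists_finiteMeasure_integral_eq_circleAverage {w : ℂ → ℝ} {c : ℂ} {R : ℝ} (hR : 0 ≤ R)
    (hw : ContinuousOn w (sphere c R)) (hw0 : ∀ e ∈ sphere c R, 0 ≤ w e) :
    ∃ σ : FiniteMeasure (sphere c R), ∀ g : ℂ → ℂ, ContinuousOn g (sphere c R) →
      ∫ e : sphere c R, g e ∂(σ : Measure (sphere c R)) =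
        circleAverage (fun e => w e • g e) c R := by
  set param : ℝ → sphere c R := fun θ => ⟨circleMap c R θ, circleMap_mem_sphere c hR θ⟩
  have hparam : Continuous param := (continuous_circleMap c R).subtype_mk _
  set density : ℝ → ℝ := fun θ => (2 * π)⁻¹ * w (circleMap c R θ)
  have hdensity : Continuous density :=
    (hw.comp_continuous (continuous_circleMap c R) (circleMap_mem_sphere c hR)).const_mul _
  have hdensity0 (θ : ℝ) : 0 ≤ density θ :=
    mul_nonneg (by positivity) (hw0 _ (circleMap_mem_sphere c hR θ))
  set μ : Measure ℝ :=
    (volume.restrict (Ioc 0 (2 * π))).withDensity fun θ => ENNReal.ofReal (density θ)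
  have : IsFiniteMeasure μ := isFiniteMeasure_withDensity_ofReal
    (hdensity.integrableOn_Icc.mono_set Ioc_subset_Icc_self).hasFiniteIntegral
  refine ⟨⟨μ.map param, inferInstance⟩, fun g hg => ?_⟩
  have hg' : Continuous fun e : sphere c R => g e := hg.domRestrict
  rw [FiniteMeasure.toMeasure_mk, integral_map hparam.aemeasurable hg'.aestronglyMeasurable,
    integral_withDensity_eq_integral_toReal_smul (by fun_prop) (by simp), circleAverage_def,
    intervalIntegral.integral_of_le two_pi_pos.le, ← integral_smul]
  refine integral_congr_ae (Eventually.of_forall fun θ => ?_)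
  simp only [ENNReal.toReal_ofReal (hdensity0 θ), density, param, mul_smul]

lemma exists_finiteMeasure_integral_eq_of_tendsto {X ι 𝕜 : Type*} [TopologicalSpace X]
    [CompactSpace X] [T2Space X] [MeasurableSpace X] [BorelSpace X] [RCLike 𝕜] {l : Filter ι}
    [l.NeBot] {σ : ι → FiniteMeasure X} {C : NNReal} (hC : ∀ᶠ i in l, (σ i).mass ≤ C) :
    ∃ μ : FiniteMeasure X, ∀ g : X → 𝕜, Continuous g → ∀ L : 𝕜,
      Tendsto (fun i => ∫ x, g x ∂(σ i : Measure X)) l (𝓝 L) →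
        ∫ x, g x ∂(μ : Measure X) = L := by
  obtain ⟨μ, -, hμ⟩ := isCompact_iff_ultrafilter_le_nhds'.1
    (isCompact_setOfPred_finiteMeasure_le_of_compactSpace X C) ((Ultrafilter.of l).map σ)
    (Ultrafilter.mem_map.2 (Ultrafilter.of_le l hC))
  have hσμ : Tendsto σ (Ultrafilter.of l) (𝓝 μ) := hμ
  refine ⟨μ, fun g hg L hL => ?_⟩
  exact tendsto_nhds_unique
    ((FiniteMeasure.tendsto_iff_forall_integral_rclike_tendsto 𝕜).1 hσμ
      (BoundedContinuousFunction.mkOfCompact ⟨g, hg⟩))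
    (hL.mono_left (Ultrafilter.of_le l))

end FiniteMeasures

section TypicallyReal

/-- Rogosinski's typically real functions on the unit disc, not normalized at the origin: real on
the real diameter, with values in the closed upper half-plane on the upper half-disc. -/
structure IsTypicallyReal (F : ℂ → ℂ) : Prop where
  differentiableOn : DifferentiableOn ℂ F (ball 0 1)
  map_conj : ∀ ζ ∈ ball (0 : ℂ) 1, F (conj ζ) = conj (F ζ)
  im_nonneg : ∀ ζ ∈ ball (0 : ℂ) 1, 0 < ζ.im → 0 ≤ (F ζ).im

variable {F : ℂ → ℂ} {r : ℝ}

namespace IsTypicallyReal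

lemma im_mul_im_nonneg (hF : IsTypicallyReal F) {ζ : ℂ} (hζ : ζ ∈ ball (0 : ℂ) 1) :
    0 ≤ ζ.im * (F ζ).im := by
  rcases lt_trichotomy ζ.im 0 with hlower | hreal | hupper
  · have hconj := hF.im_nonneg (conj ζ) (by simpa using hζ) (by simpa using hlower)
    rw [hF.map_conj ζ hζ, conj_im] at hconj
    exact mul_nonneg_of_nonpos_of_nonpos hlower.le (by linarith)
  · simp [hreal]
  · exact mul_nonneg hupper.le (hF.im_nonneg ζ hζ hupper)

lemma exists_finiteMeasure_dilation (hF : IsTypicallyReal F) (hr : r ∈ Ioo (0 : ℝ) 1) :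
    ∃ σ : FiniteMeasure (sphere (0 : ℂ) 1), ∀ ζ ∈ ball (0 : ℂ) 1,
      F (r * ζ) - F 0 =
        ∫ e : sphere (0 : ℂ) 1, robertsonKernel ζ (e : ℂ).re ∂(σ : Measure (sphere (0 : ℂ) 1)) := by
  have hmaps : MapsTo (fun ζ : ℂ => r * ζ) (closedBall 0 1) (ball 0 1) := fun ζ hζ => by
    rw [mem_closedBall_zero_iff] at hζ
    rw [mem_ball_zero_iff, norm_mul, norm_real, norm_of_nonneg hr.1.le]
    exact mul_lt_one_of_nonneg_of_lt_one_left hr.1.le hr.2 hζ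
  have hdiff : DiffContOnCl ℂ (fun ζ => F (r * ζ)) (ball 0 1) :=
    (hF.differentiableOn.comp (by fun_prop) hmaps).diffContOnCl_ball subset_rfl
  have hconj (e : ℂ) (he : e ∈ sphere (0 : ℂ) 1) : F (r * conj e) = conj (F (r * e)) := by
    rw [← hF.map_conj _ (hmaps (sphere_subset_closedBall he)), map_mul, conj_ofReal]
  have hpos (e : ℂ) (he : e ∈ sphere (0 : ℂ) 1) : 0 ≤ e.im * (F (r * e)).im := by
    have := hF.im_mul_im_nonneg (hmaps (sphere_subset_closedBall he))
    rw [im_ofReal_mul, mul_assoc] at this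
    exact nonneg_of_mul_nonneg_right this hr.1
  have hcont : ContinuousOn (fun e : ℂ => e.im * (F (r * e)).im) (sphere 0 1) :=
    continuous_im.continuousOn.mul
      (continuous_im.comp_continuousOn (continuousOn_sphere_of_diffContOnCl hdiff))
  obtain ⟨σ, hσ⟩ := exists_finiteMeasure_integral_eq_circleAverage zero_le_one hcont hpos
  refine ⟨σ, fun ζ hζ => ?_⟩
  rw [mem_ball_zero_iff] at hζ
  rw [hσ _ (continuousOn_robertsonKernel_re hζ), ← sub_eq_circleAverage_im_mul_im hdiff hconj hζ,
    mul_zero]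

end IsTypicallyReal

lemma continuous_robertsonKernel_sphere {ζ : ℂ} (hζ : ζ ∈ ball (0 : ℂ) 1) :
    Continuous fun e : sphere (0 : ℂ) 1 => robertsonKernel ζ (e : ℂ).re :=
  (continuousOn_robertsonKernel_re (mem_ball_zero_iff.1 hζ)).domRestrict

lemma mass_le_norm_integral_robertsonKernel (σ : FiniteMeasure (sphere (0 : ℂ) 1)) :
    (σ.mass : ℝ) ≤ 9 / 4 *
      ‖∫ e : sphere (0 : ℂ) 1, robertsonKernel (1 / 2) (e : ℂ).re
        ∂(σ : Measure (sphere (0 : ℂ) 1))‖ := by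
  have hint : Integrable (fun e : sphere (0 : ℂ) 1 => robertsonKernel (1 / 2) (e : ℂ).re) σ :=
    (BoundedContinuousFunction.mkOfCompact
      ⟨_, continuous_robertsonKernel_sphere (by norm_num)⟩).integrable _
  have hlower (e : sphere (0 : ℂ) 1) : 4 / 9 ≤ (robertsonKernel (1 / 2) (e : ℂ).re).re := by
    have hre := abs_le.1 (abs_re_le_norm (e : ℂ))
    rw [mem_sphere_zero_iff_norm.1 e.2] at hre
    have hkernel : robertsonKernel (1 / 2) (e : ℂ).re = ((5 / 4 - (e : ℂ).re)⁻¹ : ℝ) := by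
      rw [robertsonKernel]; push_cast; ring_nf
    rw [hkernel, ofReal_re, le_inv_comm₀ (by norm_num) (by linarith)]
    linarith
  have hmass : 4 / 9 * (σ.mass : ℝ) ≤
      ‖∫ e : sphere (0 : ℂ) 1, robertsonKernel (1 / 2) (e : ℂ).re ∂(σ : Measure _)‖ :=
    calc 4 / 9 * (σ.mass : ℝ)
        = ∫ _ : sphere (0 : ℂ) 1, (4 / 9 : ℝ) ∂(σ : Measure _) := by
          rw [integral_const, smul_eq_mul, mul_comm]; rfl
      _ ≤ ∫ e : sphere (0 : ℂ) 1, (robertsonKernel (1 / 2) (e : ℂ).re).re ∂(σ : Measure _) :=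
          integral_mono (integrable_const _) hint.re hlower
      _ = (∫ e : sphere (0 : ℂ) 1, robertsonKernel (1 / 2) (e : ℂ).re ∂(σ : Measure _)).re :=
          integral_re hint
      _ ≤ _ := re_le_norm _
  linarith

theorem IsTypicallyReal.exists_finiteMeasure (hF : IsTypicallyReal F) :
    ∃ σ : FiniteMeasure (sphere (0 : ℂ) 1), ∀ ζ ∈ ball (0 : ℂ) 1,
      F ζ - F 0 =
        ∫ e : sphere (0 : ℂ) 1, robertsonKernel ζ (e : ℂ).re ∂(σ : Measure (sphere (0 : ℂ) 1)) := by
  choose! σ hσ using fun r (hr : r ∈ Ioo (0 : ℝ) 1) => hF.exists_finiteMeasure_dilation hr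
  have hIoo : ∀ᶠ r in 𝓝[<] (1 : ℝ), r ∈ Ioo (0 : ℝ) 1 := Ioo_mem_nhdsLT zero_lt_one
  have hlim (ζ : ℂ) (hζ : ζ ∈ ball (0 : ℂ) 1) : Tendsto
      (fun r => ∫ e : sphere (0 : ℂ) 1, robertsonKernel ζ (e : ℂ).re ∂(σ r : Measure _))
      (𝓝[<] 1) (𝓝 (F ζ - F 0)) := by
    have hdil : Tendsto (fun r : ℝ => (r : ℂ) * ζ) (𝓝[<] 1) (𝓝 ζ) := by
      have : Continuous fun r : ℝ => (r : ℂ) * ζ := by fun_prop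
      simpa using (this.tendsto 1).mono_left nhdsWithin_le_nhds
    have hFζ : ContinuousAt F ζ := hF.differentiableOn.continuousOn.continuousAt
      (isOpen_ball.mem_nhds hζ)
    refine ((hFζ.tendsto.comp hdil).sub_const (F 0)).congr' ?_
    filter_upwards [hIoo] with r hr using hσ r hr ζ hζ
  have hhalf : (1 / 2 : ℂ) ∈ ball (0 : ℂ) 1 := by norm_num
  have hmass : ∀ᶠ r in 𝓝[<] (1 : ℝ),
      (σ r).mass ≤ (9 / 4 * (‖F (1 / 2) - F 0‖ + 1)).toNNReal := by
    filter_upwards [(hlim _ hhalf).norm.eventually_le_const (lt_add_one _)] with r hr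
    exact NNReal.le_toNNReal_of_coe_le
      ((mass_le_norm_integral_robertsonKernel (σ r)).trans (by gcongr))
  obtain ⟨μ, hμ⟩ := exists_finiteMeasure_integral_eq_of_tendsto (𝕜 := ℂ) hmass
  exact ⟨μ, fun ζ hζ => (hμ _ (continuous_robertsonKernel_sphere hζ) _ (hlim ζ hζ)).symm⟩

end TypicallyReal

section SlitPlane

lemma one_sub_mul_ne_zero_of_mem_C1 {z : ℂ} (hz : z ∈ C1) {t : ℝ} (ht : |t| ≤ 1) :
    1 - t * z ≠ 0 := by
  intro h
  have hzt : z = (t⁻¹ : ℝ) := by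
    rw [ofReal_inv]
    exact eq_inv_of_mul_eq_one_right (sub_eq_zero.1 h).symm
  rcases hz with him | hre
  · simp [hzt] at him
  · rw [hzt, ofReal_re, mem_Ioo, ← abs_lt, abs_inv] at hre
    have ht0 : 0 < |t| := abs_pos.2 (by rintro rfl; simp at h)
    exact hre.not_ge (one_le_inv_iff₀.2 ⟨ht0, ht⟩)

/-- The conformal map `ζ ↦ 2ζ / (1 + ζ²)` of the unit disc onto `ℂ₁`. -/
def slitMap (ζ : ℂ) : ℂ := 2 * ζ / (1 + ζ ^ 2)

variable {ζ : ℂ}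

lemma one_add_sq_ne_zero_of_norm_lt_one_s8 (hζ : ‖ζ‖ < 1) : 1 + ζ ^ 2 ≠ 0 := by
  intro h
  have hsq : ‖ζ‖ ^ 2 = 1 := by rw [← norm_pow, eq_neg_of_add_eq_zero_right h]; simp
  exact (pow_lt_one₀ (norm_nonneg ζ) hζ two_ne_zero).ne hsq

lemma slitMap_im (ζ : ℂ) :
    (slitMap ζ).im = ζ.im * (2 * (1 - ‖ζ‖ ^ 2) / normSq (1 + ζ ^ 2)) := by
  rw [← normSq_eq_norm_sq, slitMap, div_im, ← sub_div, ← mul_div_assoc]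
  congr 1
  simp only [mul_im, re_ofNat, im_ofNat, zero_mul, add_zero, pow_two, add_re, one_re, mul_re,
    sub_zero, add_im, one_im, zero_add, normSq_apply]
  ring

lemma exists_pos_slitMap_im_eq_mul (hζ : ‖ζ‖ < 1) :
    ∃ k : ℝ, 0 < k ∧ (slitMap ζ).im = ζ.im * k := by
  refine ⟨_, ?_, slitMap_im ζ⟩
  have hnum : 0 < 1 - ‖ζ‖ ^ 2 := sub_pos.2 (pow_lt_one₀ (norm_nonneg ζ) hζ two_ne_zero)
  have hden : 0 < normSq (1 + ζ ^ 2) := normSq_pos.2 (one_add_sq_ne_zero_of_norm_lt_one_s8 hζ)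
  positivity

lemma slitMap_conj (ζ : ℂ) : slitMap (conj ζ) = conj (slitMap ζ) := by
  simp [slitMap, conj_ofNat]

lemma slitMap_mem_C1 (hζ : ‖ζ‖ < 1) : slitMap ζ ∈ C1 := by
  by_cases him : ζ.im = 0
  · obtain ⟨x, rfl⟩ : ∃ x : ℝ, (x : ℂ) = ζ := ⟨ζ.re, Complex.ext rfl him.symm⟩
    have hx : |x| < 1 := by simpa using hζ
    have hreal : slitMap x = ((2 * x / (1 + x ^ 2) : ℝ) : ℂ) := by simp [slitMap]
    right
    rw [hreal, ofReal_re, mem_Ioo, lt_div_iff₀ (by positivity), div_lt_one (by positivity)]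
    rw [abs_lt] at hx
    constructor <;> nlinarith
  · obtain ⟨k, hk, hkim⟩ := exists_pos_slitMap_im_eq_mul hζ
    exact Or.inl (hkim ▸ mul_ne_zero him hk.ne')

lemma norm_ne_one_of_mul_one_add_sq_eq {z : ℂ} (hz : z ∈ C1) (h : z * (1 + ζ ^ 2) = 2 * ζ) :
    ‖ζ‖ ≠ 1 := by
  intro hζ
  have hconj : ζ * conj ζ = 1 := by simp [mul_conj, normSq_eq_norm_sq, hζ]
  have hre : ζ + conj ζ = 2 * ζ.re := by simp [add_conj]
  have hprod : ζ * (1 - ζ.re * z) = 0 := by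
    linear_combination (-1 / 2 : ℂ) * h + ζ * z / 2 * hre - z / 2 * hconj
  refine one_sub_mul_ne_zero_of_mem_C1 hz (hζ ▸ abs_re_le_norm ζ) ?_
  exact (mul_eq_zero.1 hprod).resolve_left (norm_ne_zero_iff.1 (by simp [hζ]))

/- The two solutions of `z (1 + ζ²) = 2ζ` are inverse to each other and not on the unit circle. -/
lemma exists_slitMap_eq {z : ℂ} (hz : z ∈ C1) : ∃ ζ : ℂ, ‖ζ‖ < 1 ∧ slitMap ζ = z := by
  have of_root {ζ : ℂ} (hroot : z * (1 + ζ ^ 2) = 2 * ζ) (hζ : ‖ζ‖ < 1) :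
      ∃ ζ : ℂ, ‖ζ‖ < 1 ∧ slitMap ζ = z :=
    ⟨ζ, hζ, by
      rw [slitMap, ← hroot, mul_div_cancel_right₀ _ (one_add_sq_ne_zero_of_norm_lt_one_s8 hζ)]⟩
  rcases eq_or_ne z 0 with rfl | hz0
  · exact of_root (ζ := 0) (by simp) (by simp)
  obtain ⟨s, hs⟩ : ∃ s : ℂ, s ^ 2 = 1 - z ^ 2 := IsAlgClosed.exists_pow_nat_eq _ two_pos
  set ζ : ℂ := (1 + s) / z with hζdef
  have hroot : z * (1 + ζ ^ 2) = 2 * ζ := by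
    rw [hζdef]; field_simp; linear_combination hs
  rcases lt_or_gt_of_ne (norm_ne_one_of_mul_one_add_sq_eq hz hroot) with hlt | hgt
  · exact of_root hroot hlt
  · have hζ0 : ζ ≠ 0 := norm_pos_iff.1 (one_pos.trans hgt)
    refine of_root (ζ := ζ⁻¹) ?_ (by rw [norm_inv]; exact inv_lt_one_of_one_lt₀ hgt)
    field_simp
    linear_combination hroot

lemma differentiableAt_slitMap (hζ : ‖ζ‖ < 1) : DifferentiableAt ℂ slitMap ζ :=
  DifferentiableAt.div (by fun_prop) (by fun_prop) (one_add_sq_ne_zero_of_norm_lt_one_s8 hζ)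

lemma slitMap_div_one_sub_mul (hζ : ‖ζ‖ < 1) (t : ℝ) :
    slitMap ζ / (1 - t * slitMap ζ) = robertsonKernel ζ t := by
  have hne := one_add_sq_ne_zero_of_norm_lt_one_s8 hζ
  have hden : 1 - t * slitMap ζ = (1 - 2 * t * ζ + ζ ^ 2) / (1 + ζ ^ 2) := by
    rw [slitMap]; field_simp; ring
  rw [hden, slitMap, div_div_div_cancel_right₀ hne, robertsonKernel]

variable {f : ℂ → ℂ}

lemma isTypicallyReal_comp_slitMap (hf : DifferentiableOn ℂ f C1)
    (hconj : ∀ z ∈ C1, f (conj z) = conj (f z)) (him : ∀ z ∈ C1, 0 < z.im → 0 ≤ (f z).im) :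
    IsTypicallyReal (f ∘ slitMap) where
  differentiableOn := hf.comp
    (fun ζ hζ => (differentiableAt_slitMap (mem_ball_zero_iff.1 hζ)).differentiableWithinAt)
    fun ζ hζ => slitMap_mem_C1 (mem_ball_zero_iff.1 hζ)
  map_conj ζ hζ := by
    rw [Function.comp_apply, slitMap_conj, hconj _ (slitMap_mem_C1 (mem_ball_zero_iff.1 hζ)),
      Function.comp_apply]
  im_nonneg ζ hζ hpos := by
    rw [mem_ball_zero_iff] at hζ
    obtain ⟨k, hk, hkim⟩ := exists_pos_slitMap_im_eq_mul hζ
    exact him _ (slitMap_mem_C1 hζ) (hkim ▸ mul_pos hpos hk)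

lemma continuousOn_div_one_sub_mul {z : ℂ} (hz : z ∈ C1) :
    ContinuousOn (fun t : ℝ => z / (1 - t * z)) (Icc (-1) 1) :=
  ContinuousOn.div (by fun_prop) (by fun_prop) fun _ ht =>
    one_sub_mul_ne_zero_of_mem_C1 hz (abs_le.2 ht)

theorem exists_measure_sub_eq_integral_div_one_sub_mul (hf : DifferentiableOn ℂ f C1)
    (hconj : ∀ z ∈ C1, f (conj z) = conj (f z)) (him : ∀ z ∈ C1, 0 < z.im → 0 ≤ (f z).im) :
    ∃ ρ : Measure ℝ, IsFiniteMeasure ρ ∧ (∀ᵐ t ∂ρ, t ∈ Icc (-1) 1) ∧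
      ∀ z ∈ C1, f z - f 0 = ∫ t : ℝ, z / (1 - t * z) ∂ρ := by
  obtain ⟨σ, hσ⟩ := (isTypicallyReal_comp_slitMap hf hconj him).exists_finiteMeasure
  have hre : Measurable fun e : sphere (0 : ℂ) 1 => (e : ℂ).re := by fun_prop
  refine ⟨Measure.map (fun e : sphere (0 : ℂ) 1 => (e : ℂ).re) σ, inferInstance, ?_,
    fun z hz => ?_⟩
  · refine (ae_map_iff hre.aemeasurable measurableSet_Icc).2 (Eventually.of_forall fun e => ?_)
    have := abs_re_le_norm (e : ℂ)
    rwa [mem_sphere_zero_iff_norm.1 e.2, abs_le] at this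
  · obtain ⟨ζ, hζ, rfl⟩ := exists_slitMap_eq hz
    have hzero : slitMap 0 = 0 := by simp [slitMap]
    rw [integral_map hre.aemeasurable (Measurable.aestronglyMeasurable (by fun_prop))]
    simpa only [slitMap_div_one_sub_mul hζ, Function.comp_apply, hzero] using
      hσ ζ (mem_ball_zero_iff.2 hζ)

end SlitPlane

section Inversion

/-- The image under `t ↦ t⁻¹` of the measure `t⁻² dρ(t)` on `ℝ ∖ {0}`. As `0⁻¹ = 0` by convention,
the density vanishes at `0` and an atom of `ρ` there is discarded. -/
def inversionMeasure (ρ : Measure ℝ) : Measure ℝ :=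
  (ρ.withDensity fun t => ENNReal.ofReal (t⁻¹ ^ 2)).map (MeasurableEquiv.inv ℝ)

variable {ρ : Measure ℝ} {E : Type*} [NormedAddCommGroup E] [NormedSpace ℝ E]

lemma integrable_inversionMeasure_iff {h : ℝ → E} :
    Integrable h (inversionMeasure ρ) ↔ Integrable (fun t => t⁻¹ ^ 2 • h t⁻¹) ρ := by
  rw [inversionMeasure, integrable_map_equiv,
    integrable_withDensity_iff_integrable_smul' (by fun_prop) (by simp)]
  simp only [ENNReal.toReal_ofReal (sq_nonneg _), Function.comp_apply, MeasurableEquiv.inv_apply]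

lemma integral_inversionMeasure (h : ℝ → E) :
    ∫ s, h s ∂(inversionMeasure ρ) = ∫ t, t⁻¹ ^ 2 • h t⁻¹ ∂ρ := by
  rw [inversionMeasure, integral_map_equiv,
    integral_withDensity_eq_integral_toReal_smul (by fun_prop) (by simp)]
  simp only [ENNReal.toReal_ofReal (sq_nonneg _), MeasurableEquiv.inv_apply]

lemma inversionMeasure_Ioo (hρ : ∀ᵐ t ∂ρ, t ∈ Icc (-1) 1) :
    inversionMeasure ρ (Ioo (-1) 1) = 0 := by
  rw [inversionMeasure, MeasurableEquiv.map_apply, withDensity_apply_eq_zero (by fun_prop),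
    measure_eq_zero_iff_ae_notMem]
  filter_upwards [hρ] with t ht
  rintro ⟨hdensity, htinv⟩
  have ht0 : t ≠ 0 := by rintro rfl; simp at hdensity
  rw [mem_preimage, MeasurableEquiv.inv_apply, mem_Ioo, ← abs_lt, abs_inv] at htinv
  exact htinv.not_ge (one_le_inv_iff₀.2 ⟨abs_pos.2 ht0, abs_le.2 ht⟩)

lemma integrable_inversionMeasure_one_div_one_add_sq [IsFiniteMeasure ρ] :
    Integrable (fun t : ℝ => 1 / (1 + t ^ 2)) (inversionMeasure ρ) := by
  rw [integrable_inversionMeasure_iff]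
  refine Integrable.of_bound (by fun_prop) 1 (Eventually.of_forall fun t => ?_)
  rw [smul_eq_mul, norm_of_nonneg (by positivity), mul_one_div, div_le_one (by positivity)]
  linarith

variable {z w : ℂ}

lemma div_one_sub_mul_sub_eq_indicator_add (hz : z ∈ C1) (hw : w ∈ C1) {t : ℝ} (ht : |t| ≤ 1) :
    z / (1 - t * z) - w / (1 - t * w) = indicator {0} (fun _ => z - w) t +
      t⁻¹ ^ 2 • (1 / (((t⁻¹ : ℝ) : ℂ) - z) - 1 / (((t⁻¹ : ℝ) : ℂ) - w)) := by
  rcases eq_or_ne t 0 with rfl | ht0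
  · simp
  have htC : (t : ℂ) ≠ 0 := ofReal_ne_zero.2 ht0
  have hzt := one_sub_mul_ne_zero_of_mem_C1 hz ht
  have hwt := one_sub_mul_ne_zero_of_mem_C1 hw ht
  have hresolvent (u : ℂ) : 1 / (((t⁻¹ : ℝ) : ℂ) - u) = t / (1 - t * u) := by
    have hfactor : ((t⁻¹ : ℝ) : ℂ) - u = (1 - t * u) / t := by push_cast; field_simp
    rw [hfactor, one_div_div]
  rw [indicator_of_notMem (by simpa using ht0), zero_add, hresolvent, hresolvent, real_smul,
    div_sub_div _ _ hzt hwt, div_sub_div _ _ hzt hwt, ← mul_div_assoc]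
  congr 1
  push_cast
  field_simp
  ring

lemma integrable_div_one_sub_mul [IsFiniteMeasure ρ] (hρ : ∀ᵐ t ∂ρ, t ∈ Icc (-1) 1)
    (hz : z ∈ C1) : Integrable (fun t : ℝ => z / (1 - t * z)) ρ := by
  have := (continuousOn_div_one_sub_mul hz).integrableOn_compact (μ := ρ) isCompact_Icc
  rwa [IntegrableOn, Measure.restrict_eq_self_of_ae_mem hρ] at this

lemma integrable_indicator_zero_const [IsFiniteMeasure ρ] (c : ℂ) :
    Integrable (indicator {0} fun _ : ℝ => c) ρ :=
  (integrable_const c).indicator (measurableSet_singleton 0)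

lemma integrable_inversionMeasure_resolvent_sub [IsFiniteMeasure ρ]
    (hρ : ∀ᵐ t ∂ρ, t ∈ Icc (-1) 1) (hz : z ∈ C1) (hw : w ∈ C1) :
    Integrable (fun t : ℝ => 1 / ((t : ℂ) - z) - 1 / ((t : ℂ) - w)) (inversionMeasure ρ) := by
  rw [integrable_inversionMeasure_iff]
  refine (((integrable_div_one_sub_mul hρ hz).sub (integrable_div_one_sub_mul hρ hw)).sub
    (integrable_indicator_zero_const (z - w))).congr ?_
  filter_upwards [hρ] with t ht
  simp only [Pi.sub_apply, div_one_sub_mul_sub_eq_indicator_add hz hw (abs_le.2 ht),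
    add_sub_cancel_left]

lemma integral_div_one_sub_mul_sub_eq [IsFiniteMeasure ρ]
    (hρ : ∀ᵐ t ∂ρ, t ∈ Icc (-1) 1) (hz : z ∈ C1) (hw : w ∈ C1) :
    ∫ t : ℝ, z / (1 - t * z) ∂ρ - ∫ t : ℝ, w / (1 - t * w) ∂ρ = ρ.real {0} * (z - w) +
      ∫ t : ℝ, (1 / ((t : ℂ) - z) - 1 / ((t : ℂ) - w)) ∂(inversionMeasure ρ) := by
  have hresolvent :=
    integrable_inversionMeasure_iff.1 (integrable_inversionMeasure_resolvent_sub hρ hz hw)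
  have hsplit : (fun t : ℝ => z / (1 - t * z) - w / (1 - t * w)) =ᵐ[ρ] fun t =>
      indicator {0} (fun _ => z - w) t +
        t⁻¹ ^ 2 • (1 / (((t⁻¹ : ℝ) : ℂ) - z) - 1 / (((t⁻¹ : ℝ) : ℂ) - w)) := by
    filter_upwards [hρ] with t ht using div_one_sub_mul_sub_eq_indicator_add hz hw (abs_le.2 ht)
  rw [← integral_sub (integrable_div_one_sub_mul hρ hz) (integrable_div_one_sub_mul hρ hw),
    integral_congr_ae hsplit, integral_add (integrable_indicator_zero_const _) hresolvent,
    integral_indicator_const _ (measurableSet_singleton 0), real_smul, integral_inversionMeasure]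

end Inversion

theorem stmt8_general {f : ℂ → ℂ} (hf : DifferentiableOn ℂ f C1)
    (hconj : ∀ z ∈ C1, f (conj z) = conj (f z)) (him : ∀ z ∈ C1, 0 < z.im → 0 ≤ (f z).im) :
    ∃ (a : ℝ) (ν : Measure ℝ), 0 ≤ a ∧ ν (Ioo (-1) 1) = 0 ∧
      Integrable (fun t : ℝ => 1 / (1 + t ^ 2)) ν ∧
      ∀ z ∈ C1, ∀ w ∈ C1,
        Integrable (fun t : ℝ => 1 / ((t : ℂ) - z) - 1 / ((t : ℂ) - w)) ν ∧
        f z - f w = a * (z - w) + ∫ t : ℝ, (1 / ((t : ℂ) - z) - 1 / ((t : ℂ) - w)) ∂ν := by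
  obtain ⟨ρ, hfin, hρ, hrep⟩ := exists_measure_sub_eq_integral_div_one_sub_mul hf hconj him
  refine ⟨ρ.real {0}, inversionMeasure ρ, measureReal_nonneg, inversionMeasure_Ioo hρ,
    integrable_inversionMeasure_one_div_one_add_sq, fun z hz w hw => ?_⟩
  refine ⟨integrable_inversionMeasure_resolvent_sub hρ hz hw, ?_⟩
  rw [← sub_sub_sub_cancel_right (f z) (f w) (f 0), hrep z hz, hrep w hw,
    integral_div_one_sub_mul_sub_eq hρ hz hw]

theorem stmt8 (c₁ c₂ c₃ c₄ : ℝ)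
    (h1 : -1 < c₁) (h12 : c₁ < c₂) (h2 : c₂ < 1)
    (h3 : -1 < c₃) (h34 : c₃ < c₄) (h4 : c₄ < 1)
    (f : ℂ → ℂ) (hf : MemA1 c₁ c₂ c₃ c₄ f) :
    ∃ (a : ℝ) (ν : MeasureTheory.Measure ℝ),
      0 ≤ a ∧
      ν (Set.Ioo (-1 : ℝ) 1) = 0 ∧
      MeasureTheory.Integrable (fun t : ℝ => 1 / (1 + t ^ 2)) ν ∧
      ∀ z ∈ C1,
        MeasureTheory.Integrable
          (fun t : ℝ => 1 / ((t : ℂ) - z) - 1 / ((t : ℂ) - (c₁ : ℂ))) ν ∧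
        f z - (c₃ : ℂ) = (a : ℂ) * (z - (c₁ : ℂ)) +
          ∫ t : ℝ, (1 / ((t : ℂ) - z) - 1 / ((t : ℂ) - (c₁ : ℂ))) ∂ν := by
  obtain ⟨a, ν, ha, hν, hint, hrep⟩ := stmt8_general hf.holo hf.symm hf.upper
  exact ⟨a, ν, ha, hν, hint, fun z hz => hf.val1 ▸ hrep z hz c₁ (Or.inr ⟨h1, h12.trans h2⟩)⟩
end
end
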